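/- Let F be the multivalued map of [0,1] (with the usual metric) into itself defined by F(x) = {2x/3} for 0 ≤ x < 3/4, F(x) = {1/2} for 3/4 ≤ x < 1, and F(1) = {1/3, 3/4}. Define α : [0,∞) → [1,∞) by α(t) = 4/3 for 0 ≤ t ≤ 1/2 and α(t) = 8/3 for t > 1/2, and β : [0,∞) → [0,1) by β(t) = 2/3 for 0 ≤ t ≤ 1/3, β(t) = 1/2 for 1/3 < t ≤ 1/2, and β(t) = 1/3 for t > 1/2. Then F is an (α,β)-contraction, and moreover β has property (MT) and α(t) ≤ 1 + γ(1−β(t)) for all t ≥ 0, where γ : (0,1] → [0,∞) is given by γ(1/3) = γ(1/2) = 1/3, γ(2/3) = 5/3 and γ(t) = 0 otherwise; γ is bounded with lim_{s→0⁺} γ(s) = 0 and p(s) = s − (1−s)γ(s) is essentially positive on (0,1]. -/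

import Mathlib

/-!
The pair `(α t, β t)` takes only the values `(4/3, 2/3)`, `(4/3, 1/2)`, `(8/3, 1/3)`, so the
contraction condition, property (MT) and `α ≤ 1 + γ (1 - β)` are checked on three pairs. Since `γ`
vanishes outside the three points `1 - β t`, its boundedness and its limit at `0` are automatic,
and `p s = s - (1 - s) * γ s` needs to be positive only at those points. The mapping condition is
computed along `x ↦ F x`, where only `x = 1` offers a choice: taking `1/3` rather than the nearer
point `3/4` costs the factor `(2/3) / (1/4) = 8/3`.
-/

open Filter Topology

section Step

variable {X : Type*} [PseudoMetricSpace X] {F : X → Set X} {α β : ℝ → ℝ} {x y z : X}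

/-- `y` is an admissible choice at the point `x` in the definition of an `(α, β)`-mapping, so that
`F` is an `(α, β)`-mapping when every point `x` has such a `y`. -/
def IsAlphaBetaStep (α β : ℝ → ℝ) (F : X → Set X) (x y : X) : Prop :=
  y ∈ F x ∧ dist x y ≤ α (dist x y) * Metric.infDist x (F x) ∧
    Metric.infDist y (F y) ≤ β (dist x y) * dist x y

lemma le_mul_infDist {s : Set X} (hs : s.Nonempty) {a d : ℝ} (ha : 0 < a)
    (h : ∀ w ∈ s, d ≤ a * dist x w) : d ≤ a * Metric.infDist x s :=
  (div_le_iff₀' ha).1 <| (Metric.le_infDist hs).2 fun w hw => (div_le_iff₀' ha).2 (h w hw)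

lemma isAlphaBetaStep_of_forall_dist_le (hy : y ∈ F x) (hz : z ∈ F y) (hα₀ : 0 < α (dist x y))
    (hα : ∀ w ∈ F x, dist x y ≤ α (dist x y) * dist x w)
    (hβ : dist y z ≤ β (dist x y) * dist x y) : IsAlphaBetaStep α β F x y :=
  ⟨hy, le_mul_infDist ⟨y, hy⟩ hα₀ hα, (Metric.infDist_le_dist_of_mem hz).trans hβ⟩

lemma isAlphaBetaStep_of_eq_singleton (hx : F x = {y}) (hz : z ∈ F y) (hα : 1 ≤ α (dist x y))
    (hβ : dist y z ≤ β (dist x y) * dist x y) : IsAlphaBetaStep α β F x y := by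
  refine isAlphaBetaStep_of_forall_dist_le (hx ▸ rfl) hz (by positivity) (fun w hw => ?_) hβ
  obtain rfl : w = y := by rwa [hx] at hw
  exact le_mul_of_one_le_left dist_nonneg hα

end Step

section FiniteExceptionalSet

lemma limsup_lt_of_eventually_mem_finite {ι R : Type*} [ConditionallyCompleteLinearOrder R]
    {l : Filter ι} [l.NeBot] {u : ι → R} {V : Set R} {b : R} (hV : V.Finite)
    (hu : ∀ᶠ i in l, u i ∈ V) (hb : ∀ v ∈ V, v < b) : limsup u l < b := by
  have hne : V.Nonempty := hu.exists.imp' u fun _ hi => hi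
  obtain ⟨m, hm, hmax⟩ := Set.exists_max_image V id hV hne
  obtain ⟨c, hc⟩ := hV.bddBelow
  have hbdd : IsBoundedUnder (· ≥ ·) l u := ⟨c, hu.mono fun _ hi => hc hi⟩
  calc limsup u l ≤ m :=
        limsup_le_of_le hbdd.isCoboundedUnder_le (hu.mono fun _ hi => hmax _ hi)
    _ < b := hb m hm

lemma finite_image_of_eqOn_const_sdiff {X Y : Type*} {f : X → Y} {c : Y} {I T : Set X}
    (hT : T.Finite) (hf : Set.EqOn f (fun _ => c) (I \ T)) : (f '' I).Finite := by
  refine ((hT.image f).insert c).subset ?_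
  rintro _ ⟨s, hs, rfl⟩
  by_cases hsT : s ∈ T
  · exact .inr ⟨s, hsT, rfl⟩
  · exact .inl (hf ⟨hs, hsT⟩)

lemma tendsto_nhdsWithin_of_eqOn_const_sdiff {X Y : Type*} [TopologicalSpace X] [T1Space X]
    [TopologicalSpace Y] {f : X → Y} {c : Y} {I T : Set X} {a : X} (hT : T.Finite) (ha : a ∉ T)
    (hf : Set.EqOn f (fun _ => c) (I \ T)) : Tendsto f (𝓝[I] a) (𝓝 c) := by
  refine tendsto_const_nhds.congr' ?_
  filter_upwards [self_mem_nhdsWithin,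
    mem_nhdsWithin_of_mem_nhds (hT.isClosed.isOpen_compl.mem_nhds ha)] with s hs hsT
  exact (hf ⟨hs, hsT⟩).symm

end FiniteExceptionalSet

section EssentiallyPositive

/-- Essential positivity of `p` on `I`: its infimum over `{s ∈ I | a ≤ s}` is positive for every
`a > 0`. It is encoded by a positive lower bound, because a real `sInf` over the empty set is `0`.
-/
def EssentiallyPositiveOn (p : ℝ → ℝ) (I : Set ℝ) : Prop :=
  ∀ a > (0 : ℝ), ∃ m > (0 : ℝ), ∀ s ∈ I, a ≤ s → m ≤ p s

variable {p : ℝ → ℝ} {I J T : Set ℝ}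

lemma EssentiallyPositiveOn.union (hI : EssentiallyPositiveOn p I)
    (hJ : EssentiallyPositiveOn p J) : EssentiallyPositiveOn p (I ∪ J) := by
  intro a ha
  obtain ⟨m, hm, hpI⟩ := hI a ha
  obtain ⟨n, hn, hpJ⟩ := hJ a ha
  refine ⟨min m n, lt_min hm hn, ?_⟩
  rintro s (hs | hs) has
  · exact (min_le_left m n).trans (hpI s hs has)
  · exact (min_le_right m n).trans (hpJ s hs has)

lemma EssentiallyPositiveOn.mono (hJ : EssentiallyPositiveOn p J) (hIJ : I ⊆ J) :
    EssentiallyPositiveOn p I := fun a ha =>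
  (hJ a ha).imp fun _ hm => ⟨hm.1, fun s hs => hm.2 s (hIJ hs)⟩

lemma essentiallyPositiveOn_of_finite (hT : T.Finite) (hp : ∀ s ∈ T, 0 < p s) :
    EssentiallyPositiveOn p T := by
  intro a _
  obtain rfl | hne := T.eq_empty_or_nonempty
  · exact ⟨1, one_pos, by simp⟩
  · obtain ⟨s₀, hs₀, hmin⟩ := Set.exists_min_image T p hT hne
    exact ⟨p s₀, hp s₀ hs₀, fun s hs _ => hmin s hs⟩

lemma essentiallyPositiveOn_of_eqOn_zero_sdiff {γ : ℝ → ℝ} (hT : T.Finite)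
    (hγ : Set.EqOn γ (fun _ => 0) (I \ T)) (hpos : ∀ s ∈ T, 0 < s - (1 - s) * γ s) :
    EssentiallyPositiveOn (fun s => s - (1 - s) * γ s) I := by
  have hdiff : EssentiallyPositiveOn (fun s => s - (1 - s) * γ s) (I \ T) :=
    fun a ha => ⟨a, ha, fun s hs has => by simpa [hγ hs] using has⟩
  refine ((essentiallyPositiveOn_of_finite hT hpos).union hdiff).mono ?_
  rw [Set.union_sdiff_self]
  exact Set.subset_union_right

end EssentiallyPositive

section UnitInterval

variable {F : ℝ → Set ℝ} {α β : ℝ → ℝ}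

lemma dist_eq_sub_of_le_right {x y : ℝ} (h : y ≤ x) : dist x y = x - y := by
  rw [Real.dist_eq, abs_of_nonneg (sub_nonneg.2 h)]

lemma isAlphaBetaStep_two_thirds_mul {x : ℝ} (hx : 0 ≤ x) (hFx : F x = {2 * x / 3})
    (hFy : 2 * (2 * x / 3) / 3 ∈ F (2 * x / 3)) (hα : 1 ≤ α (x / 3)) (hβ : 2 / 3 ≤ β (x / 3)) :
    IsAlphaBetaStep α β F x (2 * x / 3) := by
  have hxy : dist x (2 * x / 3) = x / 3 := by rw [dist_eq_sub_of_le_right (by linarith)]; ring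
  have hyz : dist (2 * x / 3) (2 * (2 * x / 3) / 3) = 2 / 3 * (x / 3) := by
    rw [dist_eq_sub_of_le_right (by linarith)]; ring
  refine isAlphaBetaStep_of_eq_singleton hFx hFy (by rwa [hxy]) ?_
  rw [hxy, hyz]
  gcongr

lemma isAlphaBetaStep_one_half {x : ℝ} (hx : 1 / 2 ≤ x) (hFx : F x = {1 / 2})
    (hF_half : 1 / 3 ∈ F (1 / 2)) (hα : 1 ≤ α (x - 1 / 2))
    (hβ : 1 / 6 ≤ β (x - 1 / 2) * (x - 1 / 2)) : IsAlphaBetaStep α β F x (1 / 2) := by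
  have hxy : dist x (1 / 2) = x - 1 / 2 := dist_eq_sub_of_le_right hx
  have hyz : dist (1 / 2 : ℝ) (1 / 3) = 1 / 6 := by norm_num [Real.dist_eq]
  refine isAlphaBetaStep_of_eq_singleton hFx hF_half (by rwa [hxy]) ?_
  rwa [hxy, hyz]

lemma isAlphaBetaStep_one_third (hF_one : F 1 = {1 / 3, 3 / 4}) (hF_third : 2 / 9 ∈ F (1 / 3))
    (hα : 8 / 3 ≤ α (2 / 3)) (hβ : 1 / 6 ≤ β (2 / 3)) : IsAlphaBetaStep α β F 1 (1 / 3) := by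
  have hxy : dist (1 : ℝ) (1 / 3) = 2 / 3 := by norm_num [Real.dist_eq]
  have hyz : dist (1 / 3 : ℝ) (2 / 9) = 1 / 9 := by norm_num [Real.dist_eq]
  have hxw : dist (1 : ℝ) (3 / 4) = 1 / 4 := by norm_num [Real.dist_eq]
  refine isAlphaBetaStep_of_forall_dist_le (by simp [hF_one]) hF_third (by rw [hxy]; linarith) ?_ ?_
  · rw [hF_one]
    rintro w (rfl | rfl)
    · exact le_mul_of_one_le_left dist_nonneg (by rw [hxy]; linarith)
    · rw [hxy, hxw]
      linarith
  · rw [hxy, hyz]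
    linarith

lemma exists_isAlphaBetaStep_of_mem_Icc
    (hF₁ : ∀ x : ℝ, 0 ≤ x → x < 3 / 4 → F x = {2 * x / 3})
    (hF₂ : ∀ x : ℝ, 3 / 4 ≤ x → x < 1 → F x = {1 / 2})
    (hF₃ : F 1 = {1 / 3, 3 / 4})
    (hα₁ : ∀ t : ℝ, 0 ≤ t → t ≤ 1 / 2 → 1 ≤ α t) (hα₂ : 8 / 3 ≤ α (2 / 3))
    (hβ₁ : ∀ t : ℝ, 0 ≤ t → t ≤ 1 / 3 → 2 / 3 ≤ β t)
    (hβ₂ : ∀ t : ℝ, 1 / 3 < t → t ≤ 1 / 2 → 1 / 2 ≤ β t) (hβ₃ : 1 / 6 ≤ β (2 / 3))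
    {x : ℝ} (hx : x ∈ Set.Icc (0 : ℝ) 1) : ∃ y, IsAlphaBetaStep α β F x y := by
  obtain ⟨hx₀, hx₁⟩ := hx
  rcases lt_or_ge x (3 / 4) with hx | hx
  · have hFy : 2 * (2 * x / 3) / 3 ∈ F (2 * x / 3) := by
      rw [hF₁ _ (by linarith) (by linarith)]; rfl
    exact ⟨_, isAlphaBetaStep_two_thirds_mul hx₀ (hF₁ x hx₀ hx) hFy
      (hα₁ _ (by linarith) (by linarith)) (hβ₁ _ (by linarith) (by linarith))⟩
  rcases hx₁.lt_or_eq with hx₁ | rfl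
  · have hF_half : 1 / 3 ∈ F (1 / 2) := by
      rw [hF₁ _ (by norm_num) (by norm_num)]; norm_num
    have hβ : 1 / 6 ≤ β (x - 1 / 2) * (x - 1 / 2) := by
      rcases le_or_gt (x - 1 / 2) (1 / 3) with ht | ht
      · calc (1 / 6 : ℝ) = 2 / 3 * (1 / 4) := by norm_num
          _ ≤ β (x - 1 / 2) * (x - 1 / 2) :=
            mul_le_mul_of_nonneg (hβ₁ _ (by linarith) ht) (by linarith) (by norm_num) (by linarith)
      · calc (1 / 6 : ℝ) = 1 / 2 * (1 / 3) := by norm_num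
          _ ≤ β (x - 1 / 2) * (x - 1 / 2) :=
            mul_le_mul_of_nonneg (hβ₂ _ ht (by linarith)) ht.le (by norm_num) (by linarith)
    exact ⟨_, isAlphaBetaStep_one_half (by linarith) (hF₂ x hx hx₁) hF_half
      (hα₁ _ (by linarith) (by linarith)) hβ⟩
  · have hF_third : 2 / 9 ∈ F (1 / 3) := by
      rw [hF₁ _ (by norm_num) (by norm_num)]; norm_num
    exact ⟨_, isAlphaBetaStep_one_third hF₃ hF_third hα₂ hβ₃⟩

end UnitInterval

/-- **Example 1.7 (3).** The finite-valued mapping `F` of `[0,1]` into itself with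
`F x = {2x/3}` for `0 ≤ x < 3/4`, `F x = {1/2}` for `3/4 ≤ x < 1` and
`F 1 = {1/3, 3/4}` is an `(α, β)`-contraction for the indicated piecewise constant
`α`, `β`, and all hypotheses of Theorem 1.4 hold with the indicated `γ`. -/
theorem example_is_alpha_beta_contraction
    (F : ℝ → Set ℝ)
    (hF₁ : ∀ x : ℝ, 0 ≤ x → x < 3 / 4 → F x = {2 * x / 3})
    (hF₂ : ∀ x : ℝ, 3 / 4 ≤ x → x < 1 → F x = {1 / 2})
    (hF₃ : F 1 = {1 / 3, 3 / 4})
    (α β γ : ℝ → ℝ)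
    -- definition of α on [0,∞)
    (hα₁ : ∀ t : ℝ, 0 ≤ t → t ≤ 1 / 2 → α t = 4 / 3)
    (hα₂ : ∀ t : ℝ, 1 / 2 < t → α t = 8 / 3)
    -- definition of β on [0,∞)
    (hβ₁ : ∀ t : ℝ, 0 ≤ t → t ≤ 1 / 3 → β t = 2 / 3)
    (hβ₂ : ∀ t : ℝ, 1 / 3 < t → t ≤ 1 / 2 → β t = 1 / 2)
    (hβ₃ : ∀ t : ℝ, 1 / 2 < t → β t = 1 / 3)
    -- definition of γ on (0,1]
    (hγ₁ : γ (1 / 3) = 1 / 3) (hγ₂ : γ (1 / 2) = 1 / 3) (hγ₃ : γ (2 / 3) = 5 / 3)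
    (hγ₄ : ∀ t ∈ Set.Ioc (0 : ℝ) 1,
      t ≠ 1 / 3 → t ≠ 1 / 2 → t ≠ 2 / 3 → γ t = 0) :
    -- F is an (α,β)-mapping of [0,1] into itself ...
    (∀ x ∈ Set.Icc (0 : ℝ) 1, ∃ y ∈ F x,
      dist x y ≤ α (dist x y) * Metric.infDist x (F x) ∧
      Metric.infDist y (F y) ≤ β (dist x y) * dist x y) ∧
    -- ... and in fact an (α,β)-contraction
    (∀ t > (0 : ℝ), α t * β t < 1) ∧
    -- β has property (MT)
    (∀ t : ℝ, 0 ≤ t → Filter.limsup β (nhdsWithin t (Set.Ioi t)) < 1) ∧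
    -- α(t) ≤ 1 + γ(1 - β(t))
    (∀ t : ℝ, 0 ≤ t → α t ≤ 1 + γ (1 - β t)) ∧
    -- γ is bounded (and nonnegative) on (0,1]
    (∀ s ∈ Set.Ioc (0 : ℝ) 1, 0 ≤ γ s) ∧
    (∃ M : ℝ, ∀ s ∈ Set.Ioc (0 : ℝ) 1, γ s ≤ M) ∧
    -- γ(s) → 0 as s → 0⁺
    Filter.Tendsto γ (nhdsWithin 0 (Set.Ioc (0 : ℝ) 1)) (nhds 0) ∧
    -- p(s) = s - (1-s)γ(s) is essentially positive on (0,1]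
    (∀ a > (0 : ℝ), ∃ m > (0 : ℝ), ∀ s ∈ Set.Ioc (0 : ℝ) 1, a ≤ s →
      m ≤ s - (1 - s) * γ s) := by
  have hαβ (t : ℝ) (ht : 0 ≤ t) :
      α t = 4 / 3 ∧ β t = 2 / 3 ∨ α t = 4 / 3 ∧ β t = 1 / 2 ∨ α t = 8 / 3 ∧ β t = 1 / 3 := by
    grind
  have hT : ({1 / 3, 1 / 2, 2 / 3} : Set ℝ).Finite := Set.toFinite _
  have hγ : Set.EqOn γ (fun _ => 0) (Set.Ioc 0 1 \ {1 / 3, 1 / 2, 2 / 3}) := by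
    grind [Set.EqOn]
  refine ⟨fun x => exists_isAlphaBetaStep_of_mem_Icc hF₁ hF₂ hF₃ (by grind) (by grind) (by grind)
    (by grind) (by grind), fun t ht => ?_, fun t ht => ?_, fun t ht => ?_, fun s hs => ?_, ?_,
    tendsto_nhdsWithin_of_eqOn_const_sdiff hT (by norm_num) hγ,
    essentiallyPositiveOn_of_eqOn_zero_sdiff hT hγ (by norm_num [hγ₁, hγ₂, hγ₃])⟩
  · rcases hαβ t ht.le with ⟨hα, hβ⟩ | ⟨hα, hβ⟩ | ⟨hα, hβ⟩ <;> norm_num [hα, hβ]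
  · refine limsup_lt_of_eventually_mem_finite (Set.toFinite {2 / 3, 1 / 2, 1 / 3}) ?_ (by norm_num)
    filter_upwards [self_mem_nhdsWithin] with s hs
    exact (hαβ s (ht.trans (le_of_lt hs))).imp And.right (Or.imp And.right And.right)
  · rcases hαβ t ht with ⟨hα, hβ⟩ | ⟨hα, hβ⟩ | ⟨hα, hβ⟩ <;> norm_num [hα, hβ, hγ₁, hγ₂, hγ₃]
  · by_cases hsT : s ∈ ({1 / 3, 1 / 2, 2 / 3} : Set ℝ)
    · rcases hsT with rfl | rfl | rfl <;> norm_num [hγ₁, hγ₂, hγ₃]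
    · exact (hγ ⟨hs, hsT⟩).ge
  · obtain ⟨M, hM⟩ := (finite_image_of_eqOn_const_sdiff hT hγ).bddAbove
    exact ⟨M, Set.forall_mem_image.1 hM⟩
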